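/- arXiv:1407.5898 — 6 statements merged into one kernel-verified Lean document; each statement's English description precedes it below -/
import Mathlib

section
/- Let f(x) = a₀xⁿ + ⋯ + aₙ and h(x) = c₀xᵏ + ⋯ + cₖ be non-zero polynomials with integer coefficients, with a₀ ≠ 0 and c₀ ≠ 0 their leading coefficients. If h divides f in ℤ[x], then |a₀| · (|c₀| + |c₁| + ⋯ + |cₖ|) ≤ 2ᵏ · |c₀| · ‖f‖ (equivalently, Σᵢ|cᵢ| ≤ 2ᵏ · |c₀/a₀| · ‖f‖). -/
/-!
Write `M` for the Mahler measure of a complex polynomial. It is multiplicative and bounded below by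
the absolute value of the leading coefficient, so passing from `f` to a divisor `h` does not
increase `M / |leading coefficient|`. Each coefficient of `h` is, up to the factor `c₀`, an
elementary symmetric function of its roots, which gives `|cᵢ| ≤ (k choose i) M(h)` and hence
`∑ |cᵢ| ≤ 2ᵏ M(h)`; at the other end, Landau's inequality bounds `M(f)` by `‖f‖`.
-/

open Polynomial

/-- The norm `‖f‖ = √(a₀² + ⋯ + aₙ²)` of an integer polynomial. -/
noncomputable def polyNorm (f : Polynomial ℤ) : ℝ :=
  Real.sqrt (∑ i ∈ Finset.range (f.natDegree + 1), ((f.coeff i : ℝ)) ^ 2)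

lemma sum_norm_coeff_le_two_pow_mul_mahlerMeasure (p : ℂ[X]) :
    ∑ i ∈ Finset.range (p.natDegree + 1), ‖p.coeff i‖ ≤ 2 ^ p.natDegree * p.mahlerMeasure := by
  calc ∑ i ∈ Finset.range (p.natDegree + 1), ‖p.coeff i‖
    _ ≤ ∑ i ∈ Finset.range (p.natDegree + 1), p.natDegree.choose i * p.mahlerMeasure :=
      Finset.sum_le_sum fun i _ ↦ norm_coeff_le_choose_mul_mahlerMeasure i p
    _ = 2 ^ p.natDegree * p.mahlerMeasure := by
      rw [← Finset.sum_mul]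
      congr 1
      exact_mod_cast Nat.sum_range_choose p.natDegree

lemma mahlerMeasure_le_sqrt_sum_range_sq_norm_coeff (p : ℂ[X]) :
    p.mahlerMeasure ≤ √(∑ i ∈ Finset.range (p.natDegree + 1), ‖p.coeff i‖ ^ 2) := by
  rw [← p.sum_over_range (f := fun _ a ↦ ‖a‖ ^ 2) (by simp)]
  exact mahlerMeasure_le_sqrt_sum_sq_norm_coeff p

lemma norm_leadingCoeff_mul_mahlerMeasure_le_of_dvd {p q : ℂ[X]} (hqp : q ∣ p) :
    ‖p.leadingCoeff‖ * q.mahlerMeasure ≤ ‖q.leadingCoeff‖ * p.mahlerMeasure := by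
  obtain ⟨r, rfl⟩ := hqp
  calc ‖(q * r).leadingCoeff‖ * q.mahlerMeasure
    _ = ‖q.leadingCoeff‖ * (q.mahlerMeasure * ‖r.leadingCoeff‖) := by
      rw [leadingCoeff_mul, norm_mul]; ring
    _ ≤ ‖q.leadingCoeff‖ * (q.mahlerMeasure * r.mahlerMeasure) := by
      gcongr
      · exact q.mahlerMeasure_nonneg
      · exact leadingCoeff_le_mahlerMeasure r
    _ = ‖q.leadingCoeff‖ * (q * r).mahlerMeasure := by rw [mahlerMeasure_mul]

theorem landau_mignotte_general {f h : ℂ[X]} (hdvd : h ∣ f) :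
    ‖f.leadingCoeff‖ * ∑ i ∈ Finset.range (h.natDegree + 1), ‖h.coeff i‖ ≤
      2 ^ h.natDegree * ‖h.leadingCoeff‖ *
        √(∑ i ∈ Finset.range (f.natDegree + 1), ‖f.coeff i‖ ^ 2) := by
  calc ‖f.leadingCoeff‖ * ∑ i ∈ Finset.range (h.natDegree + 1), ‖h.coeff i‖
    _ ≤ ‖f.leadingCoeff‖ * (2 ^ h.natDegree * h.mahlerMeasure) := by
      gcongr
      exact sum_norm_coeff_le_two_pow_mul_mahlerMeasure h
    _ = 2 ^ h.natDegree * (‖f.leadingCoeff‖ * h.mahlerMeasure) := by ring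
    _ ≤ 2 ^ h.natDegree * (‖h.leadingCoeff‖ * f.mahlerMeasure) := by
      gcongr 2 ^ h.natDegree * ?_
      exact norm_leadingCoeff_mul_mahlerMeasure_le_of_dvd hdvd
    _ ≤ 2 ^ h.natDegree * (‖h.leadingCoeff‖ *
          √(∑ i ∈ Finset.range (f.natDegree + 1), ‖f.coeff i‖ ^ 2)) := by
      gcongr
      exact mahlerMeasure_le_sqrt_sum_range_sq_norm_coeff f
    _ = _ := (mul_assoc ..).symm

/-- Landau–Mignotte: if `h` divides `f` in `ℤ[x]`, then
`|a₀| · (|c₀| + ⋯ + |cₖ|) ≤ 2ᵏ · |c₀| · ‖f‖`, where `a₀, c₀` are the leading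
coefficients of `f, h` and `k = deg h`. -/
theorem landau_mignotte (f h : Polynomial ℤ) (hf : f ≠ 0) (hh : h ≠ 0)
    (hdvd : h ∣ f) :
    (|f.leadingCoeff| : ℝ) *
        (∑ i ∈ Finset.range (h.natDegree + 1), |(h.coeff i : ℝ)|) ≤
      2 ^ h.natDegree * (|h.leadingCoeff| : ℝ) * polyNorm f := by
  simpa [polyNorm, natDegree_map_eq_of_injective (Int.castRingHom ℂ).injective_int,
    leadingCoeff_map_of_injective (Int.castRingHom ℂ).injective_int]
    using landau_mignotte_general (map_dvd (Int.castRingHom ℂ) hdvd)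
end

section
/- Let f ∈ ℤ[x] be a non-zero polynomial of degree n ≥ 1. If h ∈ ℤ[x] is a (non-zero) divisor of f in ℤ[x], then every coefficient c of h satisfies |c| ≤ 2^(n−1) · ‖f‖. -/
open Polynomial

/-!
The Mahler measure `M` over `ℂ` is multiplicative and at least the absolute value of the leading
coefficient. Non-zero integers have absolute value at least `1`, so a cofactor `g` in `f = h * g`
has `M g ≥ 1`, whence `M h ≤ M f`. Writing the coefficients of `h` as elementary symmetric
functions of its roots bounds the `i`-th one by `(deg h).choose i * M h`, and Landau's inequality
`M f ≤ ‖f‖` then leaves only `(deg h).choose i ≤ n.choose i ≤ 2 ^ (n - 1)`. The same argument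
applies to any imaginary quadratic order in place of `ℤ`.
-/

section MapMahlerMeasure

variable {A : Type*} [Semiring A] {v : A →+* ℂ} {f h : A[X]}

variable (v f) in
lemma mapMahlerMeasure_le_sqrt_sum_sq_norm_coeff :
    f.mapMahlerMeasure v ≤ √(∑ i ∈ Finset.range (f.natDegree + 1), ‖v (f.coeff i)‖ ^ 2) := by
  have support_subset : (f.map v).support ⊆ Finset.range (f.natDegree + 1) :=
    (support_map_subset v f).trans supp_subset_range_natDegree_succ
  calc f.mapMahlerMeasure v
      ≤ √(∑ i ∈ (f.map v).support, ‖(f.map v).coeff i‖ ^ 2) :=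
        mahlerMeasure_le_sqrt_sum_sq_norm_coeff _
    _ ≤ √(∑ i ∈ Finset.range (f.natDegree + 1), ‖(f.map v).coeff i‖ ^ 2) := by gcongr
    _ = √(∑ i ∈ Finset.range (f.natDegree + 1), ‖v (f.coeff i)‖ ^ 2) := by
        simp only [coeff_map]

lemma one_le_mapMahlerMeasure_of_one_le_norm_leadingCoeff (hf : 1 ≤ ‖v f.leadingCoeff‖) :
    1 ≤ f.mapMahlerMeasure v := by
  apply one_le_mahlerMeasure_of_one_le_norm_leadingCoeff
  have v_ne_zero : v f.leadingCoeff ≠ 0 := norm_pos_iff.mp (one_pos.trans_le hf)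
  rwa [leadingCoeff_map_of_leadingCoeff_ne_zero v v_ne_zero]

lemma noZeroDivisors_of_one_le_norm (hv : ∀ a ≠ 0, 1 ≤ ‖v a‖) : NoZeroDivisors A where
  eq_zero_or_eq_zero_of_mul_eq_zero {a b} hab := by
    have eq_zero_of_map_eq_zero (c : A) (hc : v c = 0) : c = 0 := by
      by_contra c_ne_zero
      exact norm_pos_iff.mp (one_pos.trans_le (hv c c_ne_zero)) hc
    have map_mul_eq_zero : v a * v b = 0 := by rw [← map_mul, hab, map_zero]
    exact (mul_eq_zero.mp map_mul_eq_zero).imp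
      (eq_zero_of_map_eq_zero a) (eq_zero_of_map_eq_zero b)

lemma norm_coeff_le_choose_mul_mapMahlerMeasure_of_dvd (hv : ∀ a ≠ 0, 1 ≤ ‖v a‖)
    (hf : f ≠ 0) (hdvd : h ∣ f) (i : ℕ) :
    ‖v (h.coeff i)‖ ≤ h.natDegree.choose i * f.mapMahlerMeasure v := by
  obtain ⟨g, rfl⟩ := hdvd
  have one_le_cofactor : 1 ≤ g.mapMahlerMeasure v :=
    one_le_mapMahlerMeasure_of_one_le_norm_leadingCoeff
      (hv _ (leadingCoeff_ne_zero.mpr (right_ne_zero_of_mul hf)))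
  calc ‖v (h.coeff i)‖
      = ‖(h.map v).coeff i‖ := by rw [coeff_map]
    _ ≤ (h.map v).natDegree.choose i * (h.map v * g.map v).mahlerMeasure :=
        norm_coeff_le_choose_mul_mahlerMeasure_of_one_le_mahlerMeasure i _ _ one_le_cofactor
    _ = (h.map v).natDegree.choose i * (h * g).mapMahlerMeasure v := by
        rw [mapMahlerMeasure_eq, Polynomial.map_mul]
    _ ≤ h.natDegree.choose i * (h * g).mapMahlerMeasure v := by
        gcongr
        · exact mapMahlerMeasure_nonneg _ _
        · exact natDegree_map_le

end MapMahlerMeasure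

theorem coeff_bound_of_dvd_general {A : Type*} [Semiring A] {v : A →+* ℂ}
    (hv : ∀ a ≠ 0, 1 ≤ ‖v a‖) {f h : A[X]} (hf : f ≠ 0) (hn : 1 ≤ f.natDegree) (hdvd : h ∣ f)
    (i : ℕ) :
    ‖v (h.coeff i)‖ ≤
      2 ^ (f.natDegree - 1) * √(∑ j ∈ Finset.range (f.natDegree + 1), ‖v (f.coeff j)‖ ^ 2) := by
  have : NoZeroDivisors A := noZeroDivisors_of_one_le_norm hv
  have choose_le : h.natDegree.choose i ≤ 2 ^ (f.natDegree - 1) :=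
    (Nat.choose_le_choose i (natDegree_le_of_dvd hdvd hf)).trans
      (by simpa only [Nat.sub_add_cancel hn] using Nat.choose_succ_le_two_pow (f.natDegree - 1) i)
  calc ‖v (h.coeff i)‖
      ≤ h.natDegree.choose i * f.mapMahlerMeasure v :=
        norm_coeff_le_choose_mul_mapMahlerMeasure_of_dvd hv hf hdvd i
    _ ≤ 2 ^ (f.natDegree - 1) *
          √(∑ j ∈ Finset.range (f.natDegree + 1), ‖v (f.coeff j)‖ ^ 2) := by
        gcongr
        · exact mapMahlerMeasure_nonneg _ _
        · exact_mod_cast choose_le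
        · exact mapMahlerMeasure_le_sqrt_sum_sq_norm_coeff v f

/-- If `f ∈ ℤ[x]` is non-zero of degree `n ≥ 1` and `h` is a non-zero divisor of `f`
in `ℤ[x]`, then every coefficient `c` of `h` satisfies `|c| ≤ 2^(n-1) · ‖f‖`. -/
theorem coeff_bound_of_dvd (f h : Polynomial ℤ) (hf : f ≠ 0)
    (hn : 1 ≤ f.natDegree) (hh : h ≠ 0) (hdvd : h ∣ f) :
    ∀ i : ℕ, (|h.coeff i| : ℝ) ≤ 2 ^ (f.natDegree - 1) * polyNorm f := by
  have one_le_norm (a : ℤ) (ha : a ≠ 0) : 1 ≤ ‖Int.castRingHom ℂ a‖ := by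
    simpa using mod_cast Int.one_le_abs ha
  simpa [polyNorm] using coeff_bound_of_dvd_general one_le_norm hf hn hdvd
end

section
/- Let f, g ∈ ℤ[x] be non-zero polynomials of degrees n and m with leading coefficients a₀ and b₀ respectively. If h ∈ ℤ[x] divides both f and g in ℤ[x], then every coefficient c of h satisfies |c| ≤ 2^(min{n,m}) · gcd(a₀,b₀) · min{ ‖f‖/|a₀| , ‖g‖/|b₀| }. -/
open Polynomial

/-!
Write `M` for the Mahler measure and `f = h * q`. Since `M` is multiplicative and `|lc q| ≤ M(q)`,
we get `M(h) / |lc h| ≤ M(f) / |lc f|`, and `M(f) ≤ ‖f‖` by Landau's inequality. Each coefficient of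
`h` is at most a binomial coefficient times `M(h)`, and `lc h` divides both `a₀` and `b₀`, hence
their gcd.
-/

theorem mahlerMeasure_mul_norm_leadingCoeff_le_of_dvd {p q : ℂ[X]} (hpq : p ∣ q) :
    p.mahlerMeasure * ‖q.leadingCoeff‖ ≤ ‖p.leadingCoeff‖ * q.mahlerMeasure := by
  obtain ⟨r, rfl⟩ := hpq
  calc p.mahlerMeasure * ‖(p * r).leadingCoeff‖
      = ‖p.leadingCoeff‖ * (p.mahlerMeasure * ‖r.leadingCoeff‖) := by
        rw [leadingCoeff_mul, norm_mul, mul_left_comm]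
    _ ≤ ‖p.leadingCoeff‖ * (p.mahlerMeasure * r.mahlerMeasure) := by
        gcongr
        · exact p.mahlerMeasure_nonneg
        · exact r.leadingCoeff_le_mahlerMeasure
    _ = ‖p.leadingCoeff‖ * (p * r).mahlerMeasure := by rw [mahlerMeasure_mul]

theorem norm_coeff_le_choose_mul_of_dvd {p q : ℂ[X]} (hq : q ≠ 0) (hpq : p ∣ q) (i : ℕ) :
    ‖p.coeff i‖ ≤
      p.natDegree.choose i * ‖p.leadingCoeff‖ * (q.mahlerMeasure / ‖q.leadingCoeff‖) := by
  have hlc : 0 < ‖q.leadingCoeff‖ := norm_pos_iff.mpr (leadingCoeff_ne_zero.mpr hq)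
  calc ‖p.coeff i‖ ≤ p.natDegree.choose i * p.mahlerMeasure :=
        norm_coeff_le_choose_mul_mahlerMeasure i p
    _ ≤ p.natDegree.choose i * (‖p.leadingCoeff‖ * q.mahlerMeasure / ‖q.leadingCoeff‖) := by
        gcongr
        exact (le_div_iff₀ hlc).mpr (mahlerMeasure_mul_norm_leadingCoeff_le_of_dvd hpq)
    _ = p.natDegree.choose i * ‖p.leadingCoeff‖ * (q.mahlerMeasure / ‖q.leadingCoeff‖) := by
        rw [mul_div_assoc, mul_assoc]

theorem polyNorm_nonneg (f : ℤ[X]) : 0 ≤ polyNorm f :=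
  Real.sqrt_nonneg _

theorem mahlerMeasure_map_le_polyNorm (f : ℤ[X]) :
    (f.map (Int.castRingHom ℂ)).mahlerMeasure ≤ polyNorm f := by
  set p := f.map (Int.castRingHom ℂ) with hp
  have hsum : ∑ i ∈ p.support, ‖p.coeff i‖ ^ 2 =
      ∑ i ∈ Finset.range (f.natDegree + 1), (f.coeff i : ℝ) ^ 2 := by
    calc ∑ i ∈ p.support, ‖p.coeff i‖ ^ 2
        = ∑ i ∈ Finset.range (f.natDegree + 1), ‖p.coeff i‖ ^ 2 :=
          p.sum_over_range' (f := fun _ a ↦ ‖a‖ ^ 2) (by simp) _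
            (Nat.lt_succ_of_le natDegree_map_le)
      _ = ∑ i ∈ Finset.range (f.natDegree + 1), (f.coeff i : ℝ) ^ 2 := by simp [hp]
  rw [polyNorm, ← hsum]
  exact mahlerMeasure_le_sqrt_sum_sq_norm_coeff p

theorem abs_coeff_le_choose_mul_polyNorm_of_dvd {f h : ℤ[X]} (hf : f ≠ 0) (hdvd : h ∣ f) (i : ℕ) :
    |(h.coeff i : ℝ)| ≤
      h.natDegree.choose i * |(h.leadingCoeff : ℝ)| *
        (polyNorm f / |(f.leadingCoeff : ℝ)|) := by
  have hinj : Function.Injective (Int.castRingHom ℂ) := RingHom.injective_int _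
  have hcoeff := norm_coeff_le_choose_mul_of_dvd ((Polynomial.map_ne_zero_iff hinj).mpr hf)
    (Polynomial.map_dvd (Int.castRingHom ℂ) hdvd) i
  simp only [coeff_map, natDegree_map_eq_of_injective hinj, leadingCoeff_map_of_injective hinj,
    eq_intCast, Complex.norm_intCast] at hcoeff
  refine hcoeff.trans ?_
  gcongr
  exact mahlerMeasure_map_le_polyNorm f

theorem abs_le_gcd_of_dvd {a b c : ℤ} (ha : a ≠ 0) (hca : c ∣ a) (hcb : c ∣ b) :
    |c| ≤ Int.gcd a b :=
  Int.le_of_dvd (mod_cast Int.gcd_pos_of_ne_zero_left b ha)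
    ((abs_dvd _ _).mpr (Int.dvd_coe_gcd hca hcb))

/-- If `h ∈ ℤ[x]` divides both non-zero polynomials `f` and `g` of degrees `n` and `m`
with leading coefficients `a₀` and `b₀`, then every coefficient `c` of `h` satisfies
`|c| ≤ 2^(min n m) · gcd(a₀,b₀) · min { ‖f‖/|a₀|, ‖g‖/|b₀| }`. -/
theorem coeff_bound_of_common_dvd (f g h : Polynomial ℤ) (hf : f ≠ 0) (hg : g ≠ 0)
    (hdf : h ∣ f) (hdg : h ∣ g) :
    ∀ i : ℕ, (|h.coeff i| : ℝ) ≤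
      2 ^ (min f.natDegree g.natDegree) *
        (Int.gcd f.leadingCoeff g.leadingCoeff : ℝ) *
        min (polyNorm f / |(f.leadingCoeff : ℝ)|)
            (polyNorm g / |(g.leadingCoeff : ℝ)|) := by
  intro i
  have hchoose : (h.natDegree.choose i : ℝ) ≤ 2 ^ min f.natDegree g.natDegree := by
    have hdeg : h.natDegree ≤ min f.natDegree g.natDegree :=
      le_min (natDegree_le_of_dvd hdf hf) (natDegree_le_of_dvd hdg hg)
    exact_mod_cast (Nat.choose_le_two_pow _ _).trans (Nat.pow_le_pow_right two_pos hdeg)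
  have hgcd : |(h.leadingCoeff : ℝ)| ≤ Int.gcd f.leadingCoeff g.leadingCoeff := by
    exact_mod_cast abs_le_gcd_of_dvd (leadingCoeff_ne_zero.mpr hf)
      (leadingCoeff_dvd_leadingCoeff hdf) (leadingCoeff_dvd_leadingCoeff hdg)
  have hnf := polyNorm_nonneg f
  have hng := polyNorm_nonneg g
  calc |(h.coeff i : ℝ)|
      ≤ h.natDegree.choose i * |(h.leadingCoeff : ℝ)| *
          min (polyNorm f / |(f.leadingCoeff : ℝ)|) (polyNorm g / |(g.leadingCoeff : ℝ)|) := by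
        rw [mul_min_of_nonneg _ _ (by positivity)]
        exact le_min (abs_coeff_le_choose_mul_polyNorm_of_dvd hf hdf i)
          (abs_coeff_le_choose_mul_polyNorm_of_dvd hg hdg i)
    _ ≤ _ := by gcongr
end

section
/- Let f, g ∈ ℤ[x] be non-zero polynomials and let h ∈ ℤ[x] be a common divisor of f and g of maximal degree, i.e. h ∣ f, h ∣ g, and every common divisor of f and g has degree at most deg h. Then h is a greatest common divisor of f and g (i.e. every common divisor of f and g divides h) if and only if cont(h) is associated (equal up to sign) to gcd(cont(f), cont(g)). -/
open Polynomial

/-!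
The divisor `h` divides the gcd `d` of `f` and `g`, and maximality of its degree forces `d = h * c`
with `c` constant. Contents satisfy `cont d = cont h * c` up to a unit, so comparing `cont h` with
`cont d`, which is `gcd (cont f) (cont g)`, decides whether `c` is a unit, that is, whether `h` is
itself a gcd.
-/

theorem forall_dvd_iff_associated_gcd {α : Type*} [CommMonoidWithZero α] [GCDMonoid α] {a b d : α}
    (hda : d ∣ a) (hdb : d ∣ b) :
    (∀ e : α, e ∣ a → e ∣ b → e ∣ d) ↔ Associated d (gcd a b) :=
  ⟨gcd_greatest_associated hda hdb, fun h _ hea heb => (dvd_gcd hea heb).trans h.symm.dvd⟩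

theorem exists_eq_mul_C_of_dvd_of_natDegree_le {R : Type*} [Semiring R] [NoZeroDivisors R]
    {p q : R[X]} (hpq : p ∣ q) (hdeg : q.natDegree ≤ p.natDegree) : ∃ c : R, q = p * C c := by
  obtain rfl | hq := eq_or_ne q 0
  · exact ⟨0, by rw [C_0, mul_zero]⟩
  obtain ⟨k, rfl⟩ := hpq
  have hk : k.natDegree = 0 := by
    rw [natDegree_mul (left_ne_zero_of_mul hq) (right_ne_zero_of_mul hq)] at hdeg
    lia
  exact ⟨k.coeff 0, by rw [← eq_C_of_natDegree_eq_zero hk]⟩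

section Content

variable {R : Type*} [CommRing R] [NormalizedGCDMonoid R] {p q : R[X]}

theorem content_dvd_content_of_dvd (hpq : p ∣ q) : p.content ∣ q.content :=
  dvd_content_iff_C_dvd.2 ((C_content_dvd p).trans hpq)

theorem associated_content_of_associated (hpq : Associated p q) :
    Associated p.content q.content :=
  associated_of_dvd_dvd (content_dvd_content_of_dvd hpq.dvd)
    (content_dvd_content_of_dvd hpq.symm.dvd)

theorem associated_content_gcd (p q : R[X]) :
    Associated (gcd p q).content (gcd p.content q.content) := by
  apply associated_of_dvd_dvd
  · exact dvd_gcd (content_dvd_content_of_dvd (gcd_dvd_left p q))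
      (content_dvd_content_of_dvd (gcd_dvd_right p q))
  · exact dvd_content_iff_C_dvd.2 <| dvd_gcd
      (dvd_content_iff_C_dvd.1 (gcd_dvd_left p.content q.content))
      (dvd_content_iff_C_dvd.1 (gcd_dvd_right p.content q.content))

theorem associated_content_mul_C (p : R[X]) (c : R) :
    Associated (p * C c).content (p.content * c) := by
  rw [mul_comm, mul_comm p.content]
  exact associated_content_C_mul c p

theorem associated_iff_associated_content_of_dvd_of_natDegree_le (hpq : p ∣ q)
    (hdeg : q.natDegree ≤ p.natDegree) :
    Associated p q ↔ Associated p.content q.content := by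
  refine ⟨associated_content_of_associated, fun hcont => ?_⟩
  obtain ⟨c, rfl⟩ := exists_eq_mul_C_of_dvd_of_natDegree_le hpq hdeg
  obtain rfl | hp := eq_or_ne p 0
  · rw [zero_mul]
  have hmul : Associated (p.content * 1) (p.content * c) := by
    rw [mul_one]
    exact hcont.trans (associated_content_mul_C p c)
  have hc : Associated 1 c := hmul.of_mul_left .rfl (content_eq_zero_iff.not.2 hp)
  exact associated_mul_unit_right p (C c) (isUnit_C.2 (associated_one_iff_isUnit.1 hc.symm))

theorem maxDegree_commonDivisor_isGcd_iff_content_general (f g h : R[X])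
    (hhf : h ∣ f) (hhg : h ∣ g)
    (hmax : ∀ h' : R[X], h' ∣ f → h' ∣ g → h'.natDegree ≤ h.natDegree) :
    (∀ h' : R[X], h' ∣ f → h' ∣ g → h' ∣ h) ↔
      Associated h.content (gcd f.content g.content) :=
  calc
    (∀ h' : R[X], h' ∣ f → h' ∣ g → h' ∣ h) ↔ Associated h (gcd f g) :=
      forall_dvd_iff_associated_gcd hhf hhg
    _ ↔ Associated h.content (gcd f g).content :=
      associated_iff_associated_content_of_dvd_of_natDegree_le (dvd_gcd hhf hhg)
        (hmax _ (gcd_dvd_left f g) (gcd_dvd_right f g))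
    _ ↔ Associated h.content (gcd f.content g.content) :=
      have hgcd := associated_content_gcd f g
      ⟨fun hh => hh.trans hgcd, fun hh => hh.trans hgcd.symm⟩

end Content

/-- Let `f, g ∈ ℤ[x]` be non-zero and let `h` be a common divisor of `f` and `g` of
maximal degree. Then `h` is a greatest common divisor of `f` and `g` (every common
divisor divides it) if and only if the content of `h` is associated (equal up to sign)
to `gcd(cont f, cont g)`. -/
theorem maxDegree_commonDivisor_isGcd_iff_content (f g h : Polynomial ℤ)
    (hf : f ≠ 0) (hg : g ≠ 0) (hhf : h ∣ f) (hhg : h ∣ g)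
    (hmax : ∀ h' : Polynomial ℤ, h' ∣ f → h' ∣ g → h'.natDegree ≤ h.natDegree) :
    (∀ h' : Polynomial ℤ, h' ∣ f → h' ∣ g → h' ∣ h) ↔
      Associated h.content (Int.gcd f.content g.content : ℤ) := by
  rw [Int.coe_gcd]
  exact maxDegree_commonDivisor_isGcd_iff_content_general f g h hhf hhg hmax
end

section
/- Let f, g ∈ ℤ[x] be non-zero polynomials with leading coefficients a₀ and b₀, let d ∈ ℤ[x] be a greatest common divisor of f and g in ℤ[x], and let p be a prime that does not divide at least one of a₀, b₀. Then deg d ≤ deg gcd(f_p, g_p), where gcd(f_p, g_p) is a greatest common divisor of f_p and g_p in (ℤ/pℤ)[x]. If moreover p does not divide the resultant res(f/d, g/d), then deg d = deg gcd(f_p, g_p). -/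
/-!
Since `d` divides both `f` and `g`, its leading coefficient divides theirs, so `d` keeps its degree
modulo `p`; as `d_p` divides `f_p` and `g_p`, we get `gcd(f_p, g_p) = d_p * h` for some `h ≠ 0`.
Cancelling `d_p`, the cofactor `h` divides the reductions of `f / d` and `g / d`, hence that of
their resultant, which is a combination of the two. If the resultant is nonzero modulo `p`, then
`h` is constant. When `f / d` and `g / d` are both constant, the resultant is the empty determinant
`1`, which need not be such a combination, but then `h` divides a nonzero constant directly.
-/

open Polynomial

/-- The Sylvester matrix of `f` and `g`: an `(m+n) × (m+n)` matrix (`n = deg f`,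
`m = deg g`) whose first `m` rows contain the shifted coefficients of `f` (in
descending order) and whose last `n` rows contain the shifted coefficients of `g`. -/
def sylvester {R : Type*} [CommRing R] (f g : Polynomial R) :
    Matrix (Fin (g.natDegree + f.natDegree)) (Fin (g.natDegree + f.natDegree)) R :=
  Matrix.of fun i j =>
    if (i : ℕ) < g.natDegree then
      (if (i : ℕ) ≤ (j : ℕ) ∧ (j : ℕ) ≤ (i : ℕ) + f.natDegree then
        f.coeff (f.natDegree - ((j : ℕ) - (i : ℕ))) else 0)
    else
      (if (i : ℕ) - g.natDegree ≤ (j : ℕ) ∧ (j : ℕ) ≤ (i : ℕ) then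
        g.coeff (g.natDegree - ((j : ℕ) - ((i : ℕ) - g.natDegree))) else 0)

/-- The resultant of two polynomials: the determinant of their Sylvester matrix. -/
def resultant {R : Type*} [CommRing R] (f g : Polynomial R) : R :=
  (_root_.sylvester f g).det

section Map

variable {R S : Type*} [Semiring R] [Semiring S] {φ : R →+* S}

theorem map_ne_zero_of_map_leadingCoeff_ne_zero {f : R[X]} (hf : φ f.leadingCoeff ≠ 0) :
    f.map φ ≠ 0 :=
  leadingCoeff_ne_zero.mp <| by rwa [leadingCoeff_map_of_leadingCoeff_ne_zero φ hf]

theorem map_leadingCoeff_ne_zero_of_dvd [NoZeroDivisors R] {d f : R[X]} (hdf : d ∣ f)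
    (hf : φ f.leadingCoeff ≠ 0) : φ d.leadingCoeff ≠ 0 :=
  ne_zero_of_dvd_ne_zero hf (map_dvd φ (leadingCoeff_dvd_leadingCoeff hdf))

theorem natDegree_eq_zero_of_dvd_map [NoZeroDivisors S] {f : R[X]} {h : S[X]}
    (hdvd : h ∣ f.map φ) (hmap : f.map φ ≠ 0) (hf : f.natDegree = 0) : h.natDegree = 0 :=
  Nat.le_zero.mp <| (natDegree_le_of_dvd hdvd hmap).trans <| natDegree_map_le.trans hf.le

end Map

section Resultant

variable {R : Type*} [CommRing R]

theorem associated_det_submatrix_perm {n : Type*} [Fintype n] [DecidableEq n]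
    (σ τ : Equiv.Perm n) (M : Matrix n n R) : Associated (M.submatrix σ τ).det M.det := by
  have hdet : (M.submatrix σ τ).det = (σ.sign : R) * ((τ.sign : R) * M.det) := by
    rw [← Matrix.det_permute', ← Matrix.det_permute, Matrix.submatrix_submatrix]
    rfl
  have hsign (ρ : Equiv.Perm n) : IsUnit ((ρ.sign : ℤ) : R) :=
    ρ.sign.isUnit.map (Int.castRingHom R)
  rw [hdet, associated_isUnit_mul_left_iff (hsign σ)]
  exact associated_unit_mul_left _ _ (hsign τ)

/-- The permutation of `Fin (m + n)` reversing the first `m` and the last `n` indices separately.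
It matches the rows of `_root_.sylvester`, with descending coefficients, to the columns of
`Polynomial.sylvester`, with ascending ones. -/
def blockRevPerm (m n : ℕ) : Equiv.Perm (Fin (m + n)) :=
  finSumFinEquiv.permCongr (Equiv.sumCongr Fin.revPerm Fin.revPerm)

theorem blockRevPerm_castAdd {m : ℕ} (n : ℕ) (i : Fin m) :
    blockRevPerm m n (Fin.castAdd n i) = Fin.castAdd n i.rev := by
  simp [blockRevPerm, Equiv.permCongr_apply]

theorem blockRevPerm_natAdd (m : ℕ) {n : ℕ} (i : Fin n) :
    blockRevPerm m n (Fin.natAdd m i) = Fin.natAdd m i.rev := by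
  simp [blockRevPerm, Equiv.permCongr_apply]

theorem sylvester_eq_submatrix_transpose (f g : R[X]) :
    _root_.sylvester f g = (Polynomial.sylvester g f g.natDegree f.natDegree).transpose.submatrix
      (blockRevPerm g.natDegree f.natDegree) Fin.revPerm := by
  ext i j
  induction i using Fin.addCases with
  | left i =>
    simp only [_root_.sylvester, Polynomial.sylvester, Matrix.submatrix_apply,
      Matrix.transpose_apply, Matrix.of_apply, blockRevPerm_castAdd, Fin.addCases_left,
      Fin.revPerm_apply, Fin.val_rev, Fin.val_castAdd, Set.mem_Icc]
    grind
  | right i =>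
    simp only [_root_.sylvester, Polynomial.sylvester, Matrix.submatrix_apply,
      Matrix.transpose_apply, Matrix.of_apply, blockRevPerm_natAdd, Fin.addCases_right,
      Fin.revPerm_apply, Fin.val_rev, Fin.val_natAdd, Set.mem_Icc]
    grind

theorem resultant_associated_polynomialResultant (f g : R[X]) :
    Associated (_root_.resultant f g) (Polynomial.resultant g f) := by
  rw [_root_.resultant, sylvester_eq_submatrix_transpose, Polynomial.resultant,
    ← Matrix.det_transpose (Polynomial.sylvester g f _ _)]
  exact associated_det_submatrix_perm _ _ _

theorem exists_mul_add_mul_eq_C_resultant_of_natDegree_ne_zero {f g : R[X]}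
    (hdeg : f.natDegree ≠ 0 ∨ g.natDegree ≠ 0) :
    ∃ a b : R[X], f * a + g * b = C (_root_.resultant f g) := by
  obtain ⟨b, a, -, -, hab⟩ := exists_mul_add_mul_eq_C_resultant g f le_rfl le_rfl hdeg.symm
  obtain ⟨u, hu⟩ := (resultant_associated_polynomialResultant f g).symm
  refine ⟨a * C (u : R), b * C (u : R), ?_⟩
  rw [← hu, C_mul, ← hab]
  ring

end Resultant

section CommonDivisor

variable {R S : Type*} [CommRing R] [CommRing S] {φ : R →+* S}

theorem natDegree_eq_zero_of_dvd_map_of_map_resultant_ne_zero [NoZeroDivisors S]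
    {f g : R[X]} {h : S[X]} (hf : h ∣ f.map φ) (hg : h ∣ g.map φ)
    (hmap : f.map φ ≠ 0 ∨ g.map φ ≠ 0) (hres : φ (_root_.resultant f g) ≠ 0) :
    h.natDegree = 0 := by
  by_cases hdeg : f.natDegree ≠ 0 ∨ g.natDegree ≠ 0
  · obtain ⟨a, b, hab⟩ := exists_mul_add_mul_eq_C_resultant_of_natDegree_ne_zero hdeg
    have hC : (C (_root_.resultant f g)).map φ ≠ 0 := by rwa [map_C, C_ne_zero]
    have hdvd : h ∣ (C (_root_.resultant f g)).map φ := by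
      rw [← hab, Polynomial.map_add, Polynomial.map_mul, Polynomial.map_mul]
      exact dvd_add (hf.mul_right _) (hg.mul_right _)
    exact natDegree_eq_zero_of_dvd_map hdvd hC (natDegree_C _)
  · push Not at hdeg
    exact hmap.elim (natDegree_eq_zero_of_dvd_map hf · hdeg.1)
      (natDegree_eq_zero_of_dvd_map hg · hdeg.2)

theorem degree_gcd_mod_p_general [NoZeroDivisors R] [NoZeroDivisors S] {f g d : R[X]}
    (hdf : d ∣ f) (hdg : d ∣ g) (hlead : φ f.leadingCoeff ≠ 0 ∨ φ g.leadingCoeff ≠ 0)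
    {e : S[X]} (hef : e ∣ f.map φ) (heg : e ∣ g.map φ)
    (he : ∀ e' : S[X], e' ∣ f.map φ → e' ∣ g.map φ → e' ∣ e) :
    d.natDegree ≤ e.natDegree ∧
      ∀ f₁ g₁ : R[X], f = d * f₁ → g = d * g₁ → φ (_root_.resultant f₁ g₁) ≠ 0 →
        d.natDegree = e.natDegree := by
  have hd : φ d.leadingCoeff ≠ 0 :=
    hlead.elim (map_leadingCoeff_ne_zero_of_dvd hdf) (map_leadingCoeff_ne_zero_of_dvd hdg)
  have hd₀ : d.map φ ≠ 0 := map_ne_zero_of_map_leadingCoeff_ne_zero hd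
  have hfg₀ : f.map φ ≠ 0 ∨ g.map φ ≠ 0 :=
    hlead.imp map_ne_zero_of_map_leadingCoeff_ne_zero map_ne_zero_of_map_leadingCoeff_ne_zero
  have he₀ : e ≠ 0 := hfg₀.elim (ne_zero_of_dvd_ne_zero · hef) (ne_zero_of_dvd_ne_zero · heg)
  obtain ⟨h, rfl⟩ := he (d.map φ) (map_dvd φ hdf) (map_dvd φ hdg)
  rw [natDegree_mul hd₀ (right_ne_zero_of_mul he₀), natDegree_map_of_leadingCoeff_ne_zero φ hd]
  refine ⟨Nat.le_add_right _ _, ?_⟩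
  rintro f₁ g₁ rfl rfl hres
  simp only [Polynomial.map_mul] at hef heg hfg₀
  have hh : h.natDegree = 0 :=
    natDegree_eq_zero_of_dvd_map_of_map_resultant_ne_zero
      ((mul_dvd_mul_iff_left hd₀).mp hef) ((mul_dvd_mul_iff_left hd₀).mp heg)
      (hfg₀.imp right_ne_zero_of_mul right_ne_zero_of_mul) hres
  rw [hh, add_zero]

end CommonDivisor

/-- Let `d` be a gcd of the non-zero polynomials `f, g ∈ ℤ[x]` and let `p` be a prime
not dividing at least one of the leading coefficients of `f` and `g`. Then
`deg d ≤ deg gcd(f_p, g_p)` for any gcd of the reductions `f_p, g_p` in `(ℤ/pℤ)[x]`;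
and if moreover `p ∤ res(f/d, g/d)` then `deg d = deg gcd(f_p, g_p)`. -/
theorem degree_gcd_mod_p (f g d : Polynomial ℤ) (hf : f ≠ 0) (hg : g ≠ 0)
    (hdf : d ∣ f) (hdg : d ∣ g)
    (hdgcd : ∀ e : Polynomial ℤ, e ∣ f → e ∣ g → e ∣ d)
    (p : ℕ) (hp : p.Prime)
    (hlead : ¬ ((p : ℤ) ∣ f.leadingCoeff) ∨ ¬ ((p : ℤ) ∣ g.leadingCoeff)) :
    ∀ e : Polynomial (ZMod p),
      e ∣ f.map (Int.castRingHom (ZMod p)) →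
      e ∣ g.map (Int.castRingHom (ZMod p)) →
      (∀ e' : Polynomial (ZMod p),
        e' ∣ f.map (Int.castRingHom (ZMod p)) →
        e' ∣ g.map (Int.castRingHom (ZMod p)) → e' ∣ e) →
      d.natDegree ≤ e.natDegree ∧
        (∀ f₁ g₁ : Polynomial ℤ, f = d * f₁ → g = d * g₁ →
          ¬ ((p : ℤ) ∣ _root_.resultant f₁ g₁) → d.natDegree = e.natDegree) := by
  have := Fact.mk hp
  simp only [← ZMod.intCast_zmod_eq_zero_iff_dvd] at hlead ⊢
  exact fun e hef heg he ↦ degree_gcd_mod_p_general hdf hdg hlead hef heg he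
end

section
/- Let f, g ∈ ℤ[x] be non-zero polynomials with leading coefficients a₀ and b₀, and let q be a prime not dividing gcd(a₀,b₀). Set s = deg gcd(f_q, g_q), where gcd(f_q, g_q) is a greatest common divisor of f_q and g_q in (ℤ/qℤ)[x]. Then every common divisor h ∈ ℤ[x] of f and g has degree at most s, and every coefficient c of h satisfies |c| ≤ 2^s · gcd(a₀,b₀) · min{ ‖f‖/|a₀| , ‖g‖/|b₀| }. -/
/-!
The leading coefficient of a common divisor `h` divides `d = gcd(a₀, b₀)`, so it survives reduction
modulo `q`. Hence `h_q` still has degree `deg h` and divides `gcd(f_q, g_q)`, which gives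
`deg h ≤ s`.

For the coefficients, let `M` be the Mahler measure. It is multiplicative and at least the absolute
value of the leading coefficient, so `M(h) / |lc h| ≤ M(f) / |lc f|`. Landau's inequality
`M(f) ≤ ‖f‖` then bounds `M(h)` by `d · ‖f‖ / |a₀|`, and the `i`-th coefficient of `h` is at most
`(deg h choose i) · M(h)`.
-/

open Polynomial

section Degree

variable {R S : Type*}

lemma natDegree_le_natDegree_of_map_dvd [Semiring R] [Semiring S] [NoZeroDivisors S]
    {φ : R →+* S} {p : R[X]} {e : S[X]} (hp : φ p.leadingCoeff ≠ 0) (he : e ≠ 0)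
    (hpe : p.map φ ∣ e) : p.natDegree ≤ e.natDegree :=
  natDegree_map_of_leadingCoeff_ne_zero φ hp ▸ natDegree_le_of_dvd hpe he

lemma ne_zero_of_dvd_map [Semiring R] [Semiring S] {φ : R →+* S} {p : R[X]} {e : S[X]}
    (hp : φ p.leadingCoeff ≠ 0) (hep : e ∣ p.map φ) : e ≠ 0 :=
  ne_zero_of_dvd_ne_zero
    (leadingCoeff_ne_zero.1 <| (leadingCoeff_map_of_leadingCoeff_ne_zero φ hp).trans_ne hp) hep

lemma intCast_ne_zero_or_of_natCast_gcd_ne_zero [Ring R] {a b : ℤ}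
    (hab : (Int.gcd a b : R) ≠ 0) : (a : R) ≠ 0 ∨ (b : R) ≠ 0 := by
  contrapose! hab
  rw [← Int.cast_natCast, Int.gcd_eq_gcd_ab]
  simp [hab.1, hab.2]

lemma intCast_ne_zero_of_dvd_of_natCast_ne_zero [Ring R] {a : ℤ} {n : ℕ}
    (han : a ∣ n) (hn : (n : R) ≠ 0) : (a : R) ≠ 0 := by
  have hdvd : (a : R) ∣ ((n : ℤ) : R) := map_dvd (Int.castRingHom R) han
  exact ne_zero_of_dvd_ne_zero (mod_cast hn) hdvd

lemma leadingCoeff_dvd_gcd_leadingCoeff {f g h : ℤ[X]} (hf : h ∣ f) (hg : h ∣ g) :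
    h.leadingCoeff ∣ Int.gcd f.leadingCoeff g.leadingCoeff :=
  Int.dvd_coe_gcd (leadingCoeff_dvd_leadingCoeff hf) (leadingCoeff_dvd_leadingCoeff hg)

lemma natDegree_le_natDegree_of_natCast_gcd_ne_zero [Ring R] [NoZeroDivisors R]
    {f g h : ℤ[X]} {e : R[X]}
    (hgcd : (Int.gcd f.leadingCoeff g.leadingCoeff : R) ≠ 0)
    (hef : e ∣ f.map (Int.castRingHom R)) (heg : e ∣ g.map (Int.castRingHom R))
    (hhf : h ∣ f) (hhg : h ∣ g) (hhe : h.map (Int.castRingHom R) ∣ e) :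
    h.natDegree ≤ e.natDegree := by
  have he : e ≠ 0 := (intCast_ne_zero_or_of_natCast_gcd_ne_zero hgcd).elim
    (fun hf ↦ ne_zero_of_dvd_map hf hef) (fun hg ↦ ne_zero_of_dvd_map hg heg)
  have hh : (h.leadingCoeff : R) ≠ 0 := intCast_ne_zero_of_dvd_of_natCast_ne_zero
    (leadingCoeff_dvd_gcd_leadingCoeff hhf hhg) hgcd
  exact natDegree_le_natDegree_of_map_dvd hh he hhe

end Degree

section Coefficients

lemma mahlerMeasure_div_norm_leadingCoeff_le_of_dvd {p q : ℂ[X]} (hq : q ≠ 0) (hpq : p ∣ q) :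
    p.mahlerMeasure / ‖p.leadingCoeff‖ ≤ q.mahlerMeasure / ‖q.leadingCoeff‖ := by
  obtain ⟨r, rfl⟩ := hpq
  have hr : 0 < ‖r.leadingCoeff‖ := by simpa using right_ne_zero_of_mul hq
  rw [mahlerMeasure_mul, leadingCoeff_mul, norm_mul, mul_div_mul_comm]
  exact le_mul_of_one_le_right (div_nonneg p.mahlerMeasure_nonneg (norm_nonneg _))
    ((one_le_div hr).2 r.leadingCoeff_le_mahlerMeasure)

lemma norm_coeff_le_of_dvd {p q : ℂ[X]} (hq : q ≠ 0) (hpq : p ∣ q) (i : ℕ) :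
    ‖p.coeff i‖ ≤ p.natDegree.choose i *
      (‖p.leadingCoeff‖ * (√(∑ j ∈ q.support, ‖q.coeff j‖ ^ 2) / ‖q.leadingCoeff‖)) := by
  have hp : ‖p.leadingCoeff‖ ≠ 0 := by simpa using ne_zero_of_dvd_ne_zero hq hpq
  calc ‖p.coeff i‖
      ≤ p.natDegree.choose i * p.mahlerMeasure := p.norm_coeff_le_choose_mul_mahlerMeasure i
    _ = p.natDegree.choose i * (‖p.leadingCoeff‖ * (p.mahlerMeasure / ‖p.leadingCoeff‖)) := by
        rw [mul_div_cancel₀ _ hp]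
    _ ≤ p.natDegree.choose i * (‖p.leadingCoeff‖ * (q.mahlerMeasure / ‖q.leadingCoeff‖)) := by
        gcongr _ * (_ * ?_)
        exact mahlerMeasure_div_norm_leadingCoeff_le_of_dvd hq hpq
    _ ≤ p.natDegree.choose i *
          (‖p.leadingCoeff‖ * (√(∑ j ∈ q.support, ‖q.coeff j‖ ^ 2) / ‖q.leadingCoeff‖)) := by
        gcongr
        exact q.mahlerMeasure_le_sqrt_sum_sq_norm_coeff

lemma polyNorm_eq_sqrt_sum_support (f : ℤ[X]) :
    polyNorm f = √(∑ i ∈ f.support, (f.coeff i : ℝ) ^ 2) :=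
  congrArg Real.sqrt (f.sum_over_range (f := fun _ a ↦ (a : ℝ) ^ 2) (by simp)).symm

lemma abs_coeff_le_of_dvd {f h : ℤ[X]} (hf : f ≠ 0) (hhf : h ∣ f) (i : ℕ) :
    |(h.coeff i : ℝ)| ≤ h.natDegree.choose i *
      (|(h.leadingCoeff : ℝ)| * (polyNorm f / |(f.leadingCoeff : ℝ)|)) := by
  have hinj : Function.Injective (Int.castRingHom ℂ) := Int.cast_injective
  have hbound := norm_coeff_le_of_dvd ((Polynomial.map_ne_zero_iff hinj).2 hf)
    (Polynomial.map_dvd (Int.castRingHom ℂ) hhf) i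
  simpa only [natDegree_map_eq_of_injective hinj, leadingCoeff_map_of_injective hinj,
    support_map_of_injective _ hinj, coeff_map, eq_intCast, Complex.norm_intCast, sq_abs,
    ← polyNorm_eq_sqrt_sum_support] using hbound

lemma abs_coeff_le_two_pow_mul_of_dvd {f h : ℤ[X]} {s d : ℕ} (hf : f ≠ 0) (hhf : h ∣ f)
    (hs : h.natDegree ≤ s) (hd : |(h.leadingCoeff : ℝ)| ≤ d) (i : ℕ) :
    |(h.coeff i : ℝ)| ≤ 2 ^ s * d * (polyNorm f / |(f.leadingCoeff : ℝ)|) := by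
  have hnorm : 0 ≤ polyNorm f := Real.sqrt_nonneg _
  have hchoose : (h.natDegree.choose i : ℝ) ≤ 2 ^ s := mod_cast
    (Nat.choose_le_two_pow _ _).trans (Nat.pow_le_pow_right two_pos hs)
  calc |(h.coeff i : ℝ)|
      ≤ h.natDegree.choose i *
          (|(h.leadingCoeff : ℝ)| * (polyNorm f / |(f.leadingCoeff : ℝ)|)) :=
        abs_coeff_le_of_dvd hf hhf i
    _ ≤ 2 ^ s * (d * (polyNorm f / |(f.leadingCoeff : ℝ)|)) := by gcongr
    _ = 2 ^ s * d * (polyNorm f / |(f.leadingCoeff : ℝ)|) := (mul_assoc _ _ _).symm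

lemma abs_leadingCoeff_le_gcd_leadingCoeff {f g h : ℤ[X]} (hf : f ≠ 0) (hhf : h ∣ f)
    (hhg : h ∣ g) : |h.leadingCoeff| ≤ Int.gcd f.leadingCoeff g.leadingCoeff := by
  have hpos : 0 < Int.gcd f.leadingCoeff g.leadingCoeff :=
    Int.gcd_pos_of_ne_zero_left _ (leadingCoeff_ne_zero.2 hf)
  exact Int.le_of_dvd (mod_cast hpos)
    ((abs_dvd _ _).2 (leadingCoeff_dvd_gcd_leadingCoeff hhf hhg))

end Coefficients

theorem common_divisor_bound_via_auxiliary_prime_general {R : Type*} [Ring R] [NoZeroDivisors R]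
    (f g : ℤ[X]) (hf : f ≠ 0) (hg : g ≠ 0)
    (hgcd : (Int.gcd f.leadingCoeff g.leadingCoeff : R) ≠ 0) (e : R[X])
    (hef : e ∣ f.map (Int.castRingHom R)) (heg : e ∣ g.map (Int.castRingHom R))
    (hegcd : ∀ e' : R[X], e' ∣ f.map (Int.castRingHom R) → e' ∣ g.map (Int.castRingHom R) →
      e' ∣ e)
    (h : ℤ[X]) (hhf : h ∣ f) (hhg : h ∣ g) :
    h.natDegree ≤ e.natDegree ∧
      ∀ i : ℕ, |(h.coeff i : ℝ)| ≤
        2 ^ e.natDegree * (Int.gcd f.leadingCoeff g.leadingCoeff : ℝ) *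
          min (polyNorm f / |(f.leadingCoeff : ℝ)|) (polyNorm g / |(g.leadingCoeff : ℝ)|) := by
  have hdeg : h.natDegree ≤ e.natDegree :=
    natDegree_le_natDegree_of_natCast_gcd_ne_zero hgcd hef heg hhf hhg
      (hegcd _ (map_dvd (mapRingHom _) hhf) (map_dvd (mapRingHom _) hhg))
  have hlead : |(h.leadingCoeff : ℝ)| ≤ (Int.gcd f.leadingCoeff g.leadingCoeff : ℝ) :=
    mod_cast abs_leadingCoeff_le_gcd_leadingCoeff hf hhf hhg
  refine ⟨hdeg, fun i ↦ ?_⟩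
  rw [mul_min_of_nonneg _ _ (by positivity)]
  exact le_min (abs_coeff_le_two_pow_mul_of_dvd hf hhf hdeg hlead i)
    (abs_coeff_le_two_pow_mul_of_dvd hg hhg hdeg hlead i)

/-- Let `f, g ∈ ℤ[x]` be non-zero with leading coefficients `a₀, b₀`, let `q` be a
prime not dividing `gcd(a₀,b₀)`, and let `s` be the degree of a gcd `e` of the
reductions `f_q, g_q` in `(ℤ/qℤ)[x]`. Then every common divisor `h ∈ ℤ[x]` of `f` and
`g` has degree at most `s`, and every coefficient `c` of `h` satisfies
`|c| ≤ 2^s · gcd(a₀,b₀) · min { ‖f‖/|a₀|, ‖g‖/|b₀| }`. -/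
theorem common_divisor_bound_via_auxiliary_prime (f g : Polynomial ℤ)
    (hf : f ≠ 0) (hg : g ≠ 0) (q : ℕ) (hq : q.Prime)
    (hw : ¬ (q ∣ Int.gcd f.leadingCoeff g.leadingCoeff))
    (e : Polynomial (ZMod q))
    (hef : e ∣ f.map (Int.castRingHom (ZMod q)))
    (heg : e ∣ g.map (Int.castRingHom (ZMod q)))
    (hegcd : ∀ e' : Polynomial (ZMod q),
      e' ∣ f.map (Int.castRingHom (ZMod q)) →
      e' ∣ g.map (Int.castRingHom (ZMod q)) → e' ∣ e) :
    ∀ h : Polynomial ℤ, h ∣ f → h ∣ g →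
      h.natDegree ≤ e.natDegree ∧
      ∀ i : ℕ, (|h.coeff i| : ℝ) ≤
        2 ^ e.natDegree * (Int.gcd f.leadingCoeff g.leadingCoeff : ℝ) *
          min (polyNorm f / |(f.leadingCoeff : ℝ)|)
              (polyNorm g / |(g.leadingCoeff : ℝ)|) := by
  have := Fact.mk hq
  exact common_divisor_bound_via_auxiliary_prime_general f g hf hg
    (mt (ZMod.natCast_eq_zero_iff _ _).1 hw) e hef heg hegcd
end
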